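/- For any network Γ, R_Γ is an inverse subsemigroup of S_Γ which is fundamental: the only semigroup congruence on R_Γ contained in Green's relation H is the identity congruence. -/

import Mathlib

/-! `R_Γ` is studied through a representation `rep` of `Q_Γ` by partial maps on pairs `(A, L)`, where `A`
is a set of vertices and `L` a list of relations: `t` sends `(r(t), L)` to `(s(t), tL)`, `t⁻¹` undoes
this, and `A ∈ T⁰` is the identity on the pairs `(A, L)`. All other values are undefined. The
relations (NR1)–(NR6) hold for these maps (`rep_rel`), and every element acts as a partial
injection (`rep_inj`).

Up to the relation `t r(t) = t`, a reduced linear path outside `T⁰` is a nonempty linear sequence of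
elements of `T` (`exists_lin_of_RLP`), so the nonzero elements of `R_Γ` are the classes `[αβ⁻¹]` of
such sequences with a common range (`mem_Rset_iff`). Rewriting `β⁻¹γ` letter by letter shows that
these classes together with `0` are closed under products (`Rset_mul_mem`).

The element `[αβ⁻¹]` acts exactly by `(s(β), βL) ↦ (s(α), αL)` (`rep_qw_eq_some`). Its domain
determines `β` and its image determines `α`, so `rep` is injective on `R_Γ`. Hence `[βα⁻¹]` is an
inverse of `[αβ⁻¹]`, and it is the only one because partial injections have at most one generalized
inverse (`partialInj_inverse_unique`). Finally, Green-`L`-related elements have the same domain and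
Green-`R`-related elements the same image, so `H` is trivial on `R_Γ` (`eq_of_dom_range`), and any
congruence inside `H` is the identity.
-/


namespace NetworkSemigroup

/-- A network: vertices `V`, relations `T`, with source and range maps assigning to each
relation disjoint nonempty subsets of `V`. -/
structure Network (V T : Type) where
  s : T → Set V
  r : T → Set V
  s_nonempty : ∀ t, (s t).Nonempty
  r_nonempty : ∀ t, (r t).Nonempty
  disj : ∀ t, s t ∩ r t = ∅

variable {V T : Type}

/-- Membership in `T⁰`: sources and ranges of relations, together with singletons of vertices. -/
def Network.InT0 (N : Network V T) (A : Set V) : Prop :=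
  (∃ t, A = N.s t) ∨ (∃ t, A = N.r t) ∨ (∃ v : V, A = {v})

/-- The set `T⁰` as a type. -/
def Network.T0 (N : Network V T) : Type := { A : Set V // N.InT0 A }

/-- The generating set `X = T ∪ T⁰ ∪ T⁻¹ ∪ {0}` of the presentation of `Q_Γ`. -/
inductive Gen (N : Network V T) : Type
  | pos : T → Gen N
  | neg : T → Gen N
  | ver : N.T0 → Gen N
  | zero : Gen N

namespace Gen

variable {N : Network V T}

/-- The source (as a set of vertices) of a generator. -/
def srcSet : Gen N → Set V
  | .pos t => N.s t
  | .neg t => N.r t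
  | .ver A => A.1
  | .zero => ∅

/-- The range (as a set of vertices) of a generator. -/
def rngSet : Gen N → Set V
  | .pos t => N.r t
  | .neg t => N.s t
  | .ver A => A.1
  | .zero => ∅

/-- The source of a generator, as the corresponding element of `T⁰`. -/
def srcGen : Gen N → Gen N
  | .pos t => .ver ⟨N.s t, Or.inl ⟨t, rfl⟩⟩
  | .neg t => .ver ⟨N.r t, Or.inr (Or.inl ⟨t, rfl⟩)⟩
  | .ver A => .ver A
  | .zero => .zero

/-- The range of a generator, as the corresponding element of `T⁰`. -/
def rngGen : Gen N → Gen N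
  | .pos t => .ver ⟨N.r t, Or.inr (Or.inl ⟨t, rfl⟩)⟩
  | .neg t => .ver ⟨N.s t, Or.inl ⟨t, rfl⟩⟩
  | .ver A => .ver A
  | .zero => .zero

end Gen

open FreeSemigroup

/-- The defining relations (NR1)–(NR6) of the presentation of `Q_Γ`, as a binary relation on
the free semigroup over the generators. -/
inductive NRel (N : Network V T) : FreeSemigroup (Gen N) → FreeSemigroup (Gen N) → Prop
  | nr1l (g : Gen N) (hg : g ≠ .zero) : NRel N (of g.srcGen * of g) (of g)
  | nr1r (g : Gen N) (hg : g ≠ .zero) : NRel N (of g * of g.rngGen) (of g)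
  | nr2 (g₁ g₂ : Gen N) (h₁ : g₁ ≠ .zero) (h₂ : g₂ ≠ .zero)
      (h : g₁.rngSet ∩ g₂.srcSet = ∅) : NRel N (of g₁ * of g₂) (of .zero)
  | nr3 (t₁ t₂ : T) (h : t₁ ≠ t₂) :
      NRel N (of (.neg t₁) * of (.pos t₂)) (of .zero)
  | nr4 (t : T) :
      NRel N (of (.neg t) * of (.pos t)) (of (.ver ⟨N.r t, Or.inr (Or.inl ⟨t, rfl⟩)⟩))
  | nr5 (t : T) (A : N.T0) (h : A.1 ≠ N.s t) :
      NRel N (of (.neg t) * of (.ver A)) (of .zero)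
  | nr6l (x : Gen N) : NRel N (of .zero * of x) (of .zero)
  | nr6r (x : Gen N) : NRel N (of x * of .zero) (of .zero)

/-- The congruence on the free semigroup generated by the defining relations. -/
def QCon (N : Network V T) : Con (FreeSemigroup (Gen N)) := conGen (NRel N)

/-- The semigroup `Q_Γ` given by the presentation `⟨X : R⟩`. -/
abbrev QGamma (N : Network V T) : Type := (QCon N).Quotient

/-- The congruence class of a word. -/
def Qofw {N : Network V T} (w : FreeSemigroup (Gen N)) : QGamma N := (w : (QCon N).Quotient)

/-- The zero element `[0]` of `Q_Γ`. -/
def Qzero (N : Network V T) : QGamma N := Qofw (of .zero)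

/-- Path symbols: elements of `T ∪ T⁰`. -/
def PSym (N : Network V T) : Type := T ⊕ N.T0

namespace PSym

variable {N : Network V T}

/-- The source of a path symbol. -/
def src : PSym N → Set V
  | Sum.inl t => N.s t
  | Sum.inr A => A.1

/-- The range of a path symbol. -/
def rng : PSym N → Set V
  | Sum.inl t => N.r t
  | Sum.inr A => A.1

/-- The generator corresponding to a path symbol. -/
def toGen : PSym N → Gen N
  | Sum.inl t => Gen.pos t
  | Sum.inr A => Gen.ver A

/-- The generator corresponding to the inverse of a path symbol (`t ↦ t⁻¹`, `A ↦ A`). -/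
def toInvGen : PSym N → Gen N
  | Sum.inl t => Gen.neg t
  | Sum.inr A => Gen.ver A

/-- The path symbol is the element of `T⁰` given by the set `B`. -/
def IsVerOf : PSym N → Set V → Prop
  | Sum.inl _, _ => False
  | Sum.inr A, B => A.1 = B

end PSym

/-- `L` is a path: a nonempty sequence of elements of `T ∪ T⁰` in which the range of each
symbol meets the source of the next one. -/
def IsPath (N : Network V T) (L : List (PSym N)) : Prop :=
  L ≠ [] ∧ ∀ (i : ℕ) (a b : PSym N), L[i]? = some a → L[i + 1]? = some b →
    (a.rng ∩ b.src).Nonempty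

/-- `L` is linear: the range of each symbol equals the source of the next one. -/
def IsLinear (N : Network V T) (L : List (PSym N)) : Prop :=
  ∀ (i : ℕ) (a b : PSym N), L[i]? = some a → L[i + 1]? = some b → a.rng = b.src

/-- `L = t₁⋯tₙ` is reduced: `t_{n-1} ≠ s(tₙ)` and, for `1 < i < n`,
`t_{i-1} ≠ s(tᵢ)` and `t_{i+1} ≠ r(tᵢ)`. -/
def IsReducedPath (N : Network V T) (L : List (PSym N)) : Prop :=
  (∀ (i : ℕ) (a b : PSym N), L[i]? = some a → L[i + 1]? = some b →
      i + 2 = L.length → ¬ a.IsVerOf b.src) ∧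
  (∀ (i : ℕ) (a b c : PSym N), L[i]? = some a → L[i + 1]? = some b → L[i + 2]? = some c →
      ¬ a.IsVerOf b.src ∧ ¬ c.IsVerOf b.rng)

/-- `RP(Γ)`: reduced paths. -/
def RP (N : Network V T) : Set (List (PSym N)) :=
  { L | IsPath N L ∧ IsReducedPath N L }

/-- `RLP(Γ)`: reduced linear paths. -/
def RLP (N : Network V T) : Set (List (PSym N)) :=
  { L | IsPath N L ∧ IsLinear N L ∧ IsReducedPath N L }

/-- The source `s(α)` of a path. -/
def pathSrc (N : Network V T) (L : List (PSym N)) : Set V :=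
  match L.head? with
  | some a => a.src
  | none => ∅

/-- The range `r(α)` of a path. -/
def pathRng (N : Network V T) (L : List (PSym N)) : Set V :=
  match L.getLast? with
  | some a => a.rng
  | none => ∅

/-- The path is a single symbol from `T⁰` (an "empty path"). -/
def InT0Path (N : Network V T) (L : List (PSym N)) : Prop :=
  ∃ A : N.T0, L = [Sum.inr A]

/-- The word of the free semigroup determined by a nonempty list of generators
(by convention the empty list is sent to the word `0`). -/
def genWord {N : Network V T} : List (Gen N) → FreeSemigroup (Gen N)
  | [] => of .zero
  | a :: M => ⟨a, M⟩

/-- The word `α` of a path `α`. -/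
def word {N : Network V T} (L : List (PSym N)) : FreeSemigroup (Gen N) :=
  genWord (L.map PSym.toGen)

/-- The word `α⁻¹ = tₙ⁻¹⋯t₁⁻¹` of a path `α = t₁⋯tₙ`. -/
def invWord {N : Network V T} (L : List (PSym N)) : FreeSemigroup (Gen N) :=
  genWord (L.reverse.map PSym.toInvGen)

/-- `αβ⁻¹` is in right normal form: `α ∈ RP(Γ)`, `β ∈ RLP(Γ)` and `r(α) = r(β)`. -/
def IsRNF (N : Network V T) (α β : List (PSym N)) : Prop :=
  α ∈ RP N ∧ β ∈ RLP N ∧ pathRng N α = pathRng N β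

/-- The element `[αβ⁻¹]` of `Q_Γ`. -/
def Qrnf (N : Network V T) (α β : List (PSym N)) : QGamma N :=
  Qofw (word α * invWord β)

/-- The relation `L*`: `a L* b` iff for all `x, y ∈ S¹`, `ax = ay ⇔ bx = by`. -/
def LStar {S : Type*} [Semigroup S] (a b : S) : Prop :=
  ∀ x y : WithOne S,
    (a : WithOne S) * x = (a : WithOne S) * y ↔ (b : WithOne S) * x = (b : WithOne S) * y

/-- The relation `R*`: `a R* b` iff for all `x, y ∈ S¹`, `xa = ya ⇔ xb = yb`. -/
def RStar {S : Type*} [Semigroup S] (a b : S) : Prop :=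
  ∀ x y : WithOne S,
    x * (a : WithOne S) = y * (a : WithOne S) ↔ x * (b : WithOne S) = y * (b : WithOne S)

/-- Green's relation `R`: `a R b` iff `aS¹ = bS¹`. -/
def GreenR {S : Type*} [Semigroup S] (a b : S) : Prop :=
  (∃ x : WithOne S, (a : WithOne S) * x = b) ∧ ∃ y : WithOne S, (b : WithOne S) * y = a

/-- Green's relation `L`: `a L b` iff `S¹a = S¹b`. -/
def GreenL {S : Type*} [Semigroup S] (a b : S) : Prop :=
  (∃ x : WithOne S, x * (a : WithOne S) = b) ∧ ∃ y : WithOne S, y * (b : WithOne S) = a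

/-- Green's relation `H = L ∩ R`. -/
def GreenH {S : Type*} [Semigroup S] (a b : S) : Prop :=
  GreenL a b ∧ GreenR a b


/-- The underlying set of the subsemigroup
`S_Γ = {[αβ⁻¹] : α ∈ RP(Γ), β ∈ RLP(Γ)∖T⁰, r(α) = r(β)} ∪ {[0]}` of `Q_Γ`. -/
def Sset (N : Network V T) : Set (QGamma N) :=
  { q | ∃ α β : List (PSym N), α ∈ RP N ∧ β ∈ RLP N ∧ ¬ InT0Path N β ∧
      pathRng N α = pathRng N β ∧ q = Qrnf N α β } ∪ {Qzero N}

/-- The underlying set of `R_Γ = {[αβ⁻¹] : α, β ∈ RLP(Γ)∖T⁰, r(α) = r(β)} ∪ {[0]}`. -/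
def Rset (N : Network V T) : Set (QGamma N) :=
  { q | ∃ α β : List (PSym N), α ∈ RLP N ∧ ¬ InT0Path N α ∧ β ∈ RLP N ∧ ¬ InT0Path N β ∧
      pathRng N α = pathRng N β ∧ q = Qrnf N α β } ∪ {Qzero N}

/-- An inverse semigroup: every element has a unique inverse. -/
def IsInverseSemigroup (S : Type*) [Semigroup S] : Prop :=
  ∀ a : S, ∃! b : S, a * b * a = a ∧ b * a * b = b

/-! ### Words and their classes in `Q_Γ` -/

section Words

variable {N : Network V T}

/-- The class in `Q_Γ` of the word spelled by a list of generators (meaningful for nonempty lists). -/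
def qw (l : List (Gen N)) : QGamma N := Qofw (genWord l)

theorem Qofw_mul (x y : FreeSemigroup (Gen N)) : Qofw (x * y) = Qofw x * Qofw y := rfl

theorem Qofw_eq_of_rel {x y : FreeSemigroup (Gen N)} (h : NRel N x y) : Qofw x = Qofw y :=
  (QCon N).eq.2 (ConGen.Rel.of _ _ h)

theorem qw_append {l m : List (Gen N)} (hl : l ≠ []) (hm : m ≠ []) :
    qw (l ++ m) = qw l * qw m := by
  cases l with
  | nil => exact absurd rfl hl
  | cons a l =>
    cases m with
    | nil => exact absurd rfl hm
    | cons b m => rfl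

theorem qw_cons (g : Gen N) {l : List (Gen N)} (hl : l ≠ []) : qw (g :: l) = qw [g] * qw l :=
  qw_append (l := [g]) (by simp) hl

theorem Qzero_mul (q : QGamma N) : Qzero N * q = Qzero N := by
  induction q using Con.induction_on with
  | H w =>
    induction w using FreeSemigroup.recOnMul with
    | ih1 x => exact Qofw_eq_of_rel (NRel.nr6l x)
    | ih2 x y hx hy =>
      change Qzero N * (Qofw (of x) * Qofw y) = _
      rw [← mul_assoc]
      exact (congrArg (· * Qofw y) hx).trans hy

theorem mul_Qzero (q : QGamma N) : q * Qzero N = Qzero N := by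
  induction q using Con.induction_on with
  | H w =>
    induction w using FreeSemigroup.recOnMul with
    | ih1 x => exact Qofw_eq_of_rel (NRel.nr6r x)
    | ih2 x y hx hy =>
      change (Qofw (of x) * Qofw y) * Qzero N = _
      rw [mul_assoc]
      exact (congrArg (Qofw (of x) * ·) hy).trans hx

/-- The source of a word's first letter acts on it as a left identity. -/
theorem src_mul_qw (g : Gen N) (hg : g ≠ .zero) (l : List (Gen N)) :
    qw [g.srcGen] * qw (g :: l) = qw (g :: l) := by
  have h : qw [g.srcGen] * qw [g] = qw [g] := Qofw_eq_of_rel (NRel.nr1l g hg)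
  by_cases hl : l = []
  · rw [hl, h]
  · rw [qw_cons g hl, ← mul_assoc, h]

theorem neg_mul_pos_ne {t u : T} (h : t ≠ u) :
    qw [(Gen.neg t : Gen N)] * qw [Gen.pos u] = Qzero N :=
  Qofw_eq_of_rel (NRel.nr3 t u h)

/-- Inverse letters compose linearly: `t⁻¹u⁻¹ = t⁻¹ r(u) u⁻¹` vanishes unless `s(t) = r(u)`. -/
theorem neg_mul_neg_ne {t u : T} (h : N.r u ≠ N.s t) :
    qw [(Gen.neg t : Gen N)] * qw [Gen.neg u] = Qzero N := by
  have h1 : qw [(Gen.neg t : Gen N)] * qw [(Gen.neg u : Gen N).srcGen] = Qzero N :=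
    Qofw_eq_of_rel (NRel.nr5 t _ h)
  rw [← src_mul_qw (.neg u) (by simp) [], ← mul_assoc, h1, Qzero_mul]

end Words

/-! ### Products of classes of linear sequences -/

section Linear

variable {N : Network V T}

/-- `Lin N A α B`: the sequence `α` of relations is linear with source `A` and range `B`; the empty
sequence is linear from every set to itself. -/
def Lin (N : Network V T) : Set V → List T → Set V → Prop
  | A, [], B => A = B
  | A, t :: α, B => A = N.s t ∧ Lin N (N.r t) α B

theorem Lin.append {A B C : Set V} {α β : List T} (h : Lin N A α B) (h' : Lin N B β C) :
    Lin N A (α ++ β) C := by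
  induction α generalizing A with
  | nil => cases h; exact h'
  | cons t α ih => exact ⟨h.1, ih h.2⟩

theorem Lin.src_unique {A A' B B' : Set V} {α : List T} (hα : α ≠ []) (h : Lin N A α B)
    (h' : Lin N A' α B') : A = A' := by
  cases α with
  | nil => exact absurd rfl hα
  | cons t α => exact h.1.trans h'.1.symm

theorem Lin.last {A B : Set V} {α : List T} {u : T} (h : Lin N A (α ++ [u]) B) : N.r u = B := by
  induction α generalizing A with
  | nil => exact h.2
  | cons t α ih => exact ih h.2

/-- The letters of `αδ⁻¹`. -/
def letters (N : Network V T) (α δ : List T) : List (Gen N) :=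
  α.map Gen.pos ++ δ.reverse.map Gen.neg

theorem letters_ne_nil {α δ : List T} (hδ : δ ≠ []) : letters N α δ ≠ [] := by
  simp [letters, hδ]

/-- The classes `[αδ⁻¹]` with `αδ⁻¹` starting at `A` and `δ` nonempty, together with zero. The
sequence `α` may be empty, so that partial rewritings of `β⁻¹γδ⁻¹` are covered. -/
def RPlus (N : Network V T) (A : Set V) (q : QGamma N) : Prop :=
  q = Qzero N ∨ ∃ α δ B C, δ ≠ [] ∧ Lin N A α B ∧ Lin N C δ B ∧ q = qw (letters N α δ)

/-- The set `r(t)` is a left identity for `αδ⁻¹` when it is the source of this word, which for empty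
`α` is the range of `δ`. -/
theorem src_mul_letters {t : T} {α δ : List T} {B C : Set V} (hδ : δ ≠ [])
    (hα : Lin N (N.r t) α B) (hδB : Lin N C δ B) :
    qw [.ver ⟨N.r t, Or.inr (Or.inl ⟨t, rfl⟩)⟩] * qw (letters N α δ) = qw (letters N α δ) := by
  cases α with
  | nil =>
    obtain ⟨δ', u, rfl⟩ := List.eq_nil_or_concat' δ |>.resolve_left hδ
    have hu : N.r t = N.r u := hα.trans hδB.last.symm
    have h := src_mul_qw (N := N) (.neg u) (by simp) (δ'.reverse.map .neg)
    have e : (Gen.neg u : Gen N).srcGen = .ver ⟨N.r t, Or.inr (Or.inl ⟨t, rfl⟩)⟩ := by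
      simp [Gen.srcGen, hu]
    rw [e] at h
    simpa [letters] using h
  | cons u α =>
    have h := src_mul_qw (N := N) (.pos u) (by simp) (α.map .pos ++ δ.reverse.map .neg)
    have e : (Gen.pos u : Gen N).srcGen = .ver ⟨N.r t, Or.inr (Or.inl ⟨t, rfl⟩)⟩ := by
      simp [Gen.srcGen, hα.1]
    rw [e] at h
    simpa [letters] using h

/-- Left multiplication by `t⁻¹` either cancels a leading `t`, lengthens `δ⁻¹` when `α` is empty, or
gives zero. -/
theorem RPlus.neg_mul (t : T) {A : Set V} {q : QGamma N} (h : RPlus N A q) :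
    RPlus N (N.r t) (qw [.neg t] * q) := by
  obtain rfl | ⟨α, δ, B, C, hδ, hα, hδB, rfl⟩ := h
  · exact Or.inl (mul_Qzero _)
  · cases α with
    | nil =>
      obtain ⟨δ', u, rfl⟩ := List.eq_nil_or_concat' δ |>.resolve_left hδ
      by_cases hut : N.r u = N.s t
      · refine Or.inr ⟨[], (δ' ++ [u]) ++ [t], N.r t, C, by simp, rfl, ?_, ?_⟩
        · exact hδB.append ⟨hδB.last.symm.trans hut, rfl⟩
        · rw [← qw_cons _ (letters_ne_nil hδ)]
          simp [letters]
      · left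
        have e : letters N [] (δ' ++ [u]) = .neg u :: δ'.reverse.map .neg := by simp [letters]
        rw [e]
        by_cases hd : δ'.reverse.map (Gen.neg (N := N)) = []
        · rw [hd, neg_mul_neg_ne hut]
        · rw [qw_cons _ hd, ← mul_assoc, neg_mul_neg_ne hut, Qzero_mul]
    | cons u α =>
      have e : qw (letters N (u :: α) δ) = qw [.pos u] * qw (letters N α δ) :=
        qw_cons _ (letters_ne_nil hδ)
      rw [e, ← mul_assoc]
      by_cases htu : t = u
      · subst htu
        refine Or.inr ⟨α, δ, B, C, hδ, hα.2, hδB, ?_⟩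
        have h4 : qw [(Gen.neg t : Gen N)] * qw [.pos t] =
            qw [.ver ⟨N.r t, Or.inr (Or.inl ⟨t, rfl⟩)⟩] := Qofw_eq_of_rel (NRel.nr4 t)
        rw [h4, src_mul_letters hδ hα.2 hδB]
      · left
        rw [neg_mul_pos_ne htu, Qzero_mul]

theorem RPlus.inv_mul {β : List T} (hβ : β ≠ []) {A B C : Set V} (hB : Lin N C β B)
    {q : QGamma N} (h : RPlus N A q) : RPlus N B (qw (letters N [] β) * q) := by
  induction β generalizing A C q with
  | nil => exact absurd rfl hβ
  | cons t β ih =>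
    by_cases hb : β = []
    · subst hb
      cases hB.2
      exact h.neg_mul t
    · have e : qw (letters N [] (t :: β)) = qw (letters N [] β) * qw [.neg t] := by
        rw [← qw_append (letters_ne_nil hb) (by simp)]
        simp [letters]
      rw [e, mul_assoc]
      exact ih hb hB.2 (h.neg_mul t)

/-- The classes `[αδ⁻¹]` of nonempty linear sequences `α`, `δ` with a common range, together with
zero. This is `R_Γ` by `mem_Rset_iff`. -/
def RLin (N : Network V T) (q : QGamma N) : Prop :=
  q = Qzero N ∨ ∃ α δ A B C, α ≠ [] ∧ δ ≠ [] ∧ Lin N A α B ∧ Lin N C δ B ∧ q = qw (letters N α δ)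

/-- Products stay in `RPlus`. The second part, where `α` is nonempty, is what closure of `R_Γ` needs;
the first carries the source through the induction on `α`. -/
theorem RPlus.mul {α β : List T} (hβ : β ≠ []) {A B C D : Set V} (hA : Lin N A α B)
    (hB : Lin N C β B) {q : QGamma N} (h : RPlus N D q) :
    RPlus N A (qw (letters N α β) * q) ∧ (α ≠ [] → RLin N (qw (letters N α β) * q)) := by
  induction α generalizing A with
  | nil => cases hA; exact ⟨h.inv_mul hβ hB, fun h => absurd rfl h⟩
  | cons t α ih =>
    have e : qw (letters N (t :: α) β) = qw [.pos t] * qw (letters N α β) :=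
      qw_cons _ (letters_ne_nil hβ)
    rw [e, mul_assoc]
    obtain h0 | ⟨γ, δ, B', C', hδ, hγ, hδB, hq⟩ := (ih hA.2).1
    · rw [h0, mul_Qzero]
      exact ⟨Or.inl rfl, fun _ => Or.inl rfl⟩
    · have e' : qw [.pos t] * qw (letters N γ δ) = qw (letters N (t :: γ) δ) :=
        (qw_cons _ (letters_ne_nil hδ)).symm
      rw [hq, e']
      exact ⟨Or.inr ⟨t :: γ, δ, B', C', hδ, ⟨hA.1, hγ⟩, hδB, rfl⟩,
        fun _ => Or.inr ⟨t :: γ, δ, A, B', C', by simp, hδ, ⟨hA.1, hγ⟩, hδB, rfl⟩⟩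

theorem RLin.mul {p q : QGamma N} (hp : RLin N p) (hq : RLin N q) : RLin N (p * q) := by
  obtain rfl | ⟨α, β, A, B, C, hα, hβ, hA, hB, rfl⟩ := hp
  · exact Or.inl (Qzero_mul _)
  · obtain rfl | ⟨γ, δ, A', B', C', _, hδ, hA', hB', rfl⟩ := hq
    · exact Or.inl (mul_Qzero _)
    · exact (RPlus.mul hβ hA hB (Or.inr ⟨γ, δ, B', C', hδ, hA', hB', rfl⟩)).2 hα

end Linear

/-! ### Reduced linear paths as linear sequences of relations -/

section Paths

variable {N : Network V T}

/-- A relation, regarded as a path symbol. -/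
def tsym (N : Network V T) (t : T) : PSym N := Sum.inl t

theorem IsLinear.tail {a : PSym N} {L : List (PSym N)} (h : IsLinear N (a :: L)) : IsLinear N L :=
  fun i x y hx hy => h (i + 1) x y (by simpa using hx) (by simpa using hy)

theorem IsLinear.lin {α : List T} (hα : α ≠ []) (h : IsLinear N (α.map (tsym N))) :
    ∃ A, Lin N A α (pathRng N (α.map (tsym N))) := by
  induction α with
  | nil => exact absurd rfl hα
  | cons t α ih =>
    refine ⟨N.s t, rfl, ?_⟩
    cases α with
    | nil => rfl
    | cons u α =>
      obtain ⟨A, hA⟩ := ih (by simp) h.tail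
      have h1 : N.r t = N.s u := h 0 (tsym N t) (tsym N u) rfl rfl
      have e : pathRng N ((t :: u :: α).map (tsym N)) =
          pathRng N ((u :: α).map (tsym N)) := by
        simp [pathRng, List.getLast?_cons_cons]
      rw [e]
      exact ⟨h1, hA.2⟩

theorem Lin.isLinear {A B : Set V} {α : List T} (h : Lin N A α B) :
    IsLinear N (α.map (tsym N)) := by
  induction α generalizing A with
  | nil => intro i a b ha; simp at ha
  | cons t α ih =>
    intro i a b ha hb
    cases i with
    | zero =>
      cases α with
      | nil => simp at hb
      | cons u α =>
        simp only [List.map_cons, List.getElem?_cons_zero, List.getElem?_cons_succ, zero_add,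
          Option.some.injEq] at ha hb
        subst ha hb
        exact h.2.1
    | succ i =>
      exact ih h.2 i a b (by simpa using ha) (by simpa using hb)

theorem Lin.pathRng {A B : Set V} {α : List T} (hα : α ≠ []) (h : Lin N A α B) :
    pathRng N (α.map (tsym N)) = B := by
  obtain ⟨α', u, rfl⟩ := List.eq_nil_or_concat' α |>.resolve_left hα
  have e : ((α' ++ [u]).map (tsym N)).getLast? = some (tsym N u) := by simp
  rw [NetworkSemigroup.pathRng, e]
  exact h.last

theorem Lin.mem_RLP {A B : Set V} {α : List T} (hα : α ≠ []) (h : Lin N A α B) :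
    α.map (tsym N) ∈ RLP N ∧ ¬ InT0Path N (α.map (tsym N)) := by
  have inl_of : ∀ (i : ℕ) (a : PSym N), (α.map (tsym N))[i]? = some a →
      ∃ t, a = tsym N t := by
    intro i a ha
    obtain ⟨t, _, rfl⟩ := List.mem_map.1 (List.mem_of_getElem? ha)
    exact ⟨t, rfl⟩
  refine ⟨⟨⟨fun hn => hα (List.map_eq_nil_iff.1 hn), fun i a b ha hb => ?_⟩, h.isLinear,
    fun i a b ha hb _ => ?_, fun i a b c ha hb hc => ⟨?_, ?_⟩⟩, ?_⟩
  · have hl := h.isLinear i a b ha hb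
    obtain ⟨t, rfl⟩ := inl_of _ _ ha
    rw [← hl, Set.inter_self]
    exact N.r_nonempty t
  · obtain ⟨t, rfl⟩ := inl_of _ _ ha
    exact id
  · obtain ⟨t, rfl⟩ := inl_of _ _ ha
    exact id
  · obtain ⟨t, rfl⟩ := inl_of _ _ hc
    exact id
  · rintro ⟨A, hA⟩
    obtain ⟨t, ht⟩ := inl_of 0 (Sum.inr A : T ⊕ N.T0) ((congrArg (·[0]?) hA).trans rfl)
    cases ht

theorem Qofw_word_map {α : List T} :
    Qofw (word (α.map (tsym N))) = qw (α.map Gen.pos) := by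
  simp only [word, qw, List.map_map]; rfl

theorem Qofw_invWord_map {α : List T} :
    Qofw (invWord (α.map (tsym N))) = qw (α.reverse.map Gen.neg) := by
  simp only [invWord, qw, ← List.map_reverse, List.map_map]; rfl

/-- In a reduced linear path of length at least three no symbol lies in `T⁰`: such a symbol would
equal the source of its successor, or the range of its predecessor. -/
theorem inl_of_reduced {L : List (PSym N)} (hlin : IsLinear N L) (hred : IsReducedPath N L)
    (h3 : 3 ≤ L.length) : ∀ a ∈ L, ∃ t, tsym N t = a := by
  intro a ha
  obtain ⟨i, hi, rfl⟩ := List.mem_iff_getElem.1 ha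
  rcases hL : L[i] with t | A
  · exact ⟨t, rfl⟩
  exfalso
  have hA : L[i]? = some (Sum.inr A) := (List.getElem?_eq_getElem hi).trans (congrArg some hL)
  by_cases h1 : i + 1 < L.length
  · have hb := List.getElem?_eq_getElem h1
    have hs : A.1 = (L[i + 1]).src := hlin i _ _ hA hb
    by_cases h2 : i + 2 < L.length
    · exact (hred.2 i _ _ _ hA hb (List.getElem?_eq_getElem h2)).1 hs
    · exact hred.1 i _ _ hA hb (by omega) hs
  · obtain ⟨j, rfl⟩ : ∃ j, i = j + 2 := ⟨i - 2, by omega⟩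
    have h1 : j + 1 < L.length := by omega
    have h0 : j < L.length := by omega
    have hb := List.getElem?_eq_getElem h1
    have hs : (L[j + 1]).rng = A.1 := hlin (j + 1) _ _ hb hA
    exact (hred.2 j _ _ _ (List.getElem?_eq_getElem h0) hb hA).2 hs.symm

/-- A reduced linear path outside `T⁰` is either a linear sequence of relations or the exceptional
path `t r(t)`, so it represents the same element as a nonempty linear sequence of relations. -/
theorem exists_lin_of_RLP {L : List (PSym N)} (hL : L ∈ RLP N) (h0 : ¬ InT0Path N L) :
    ∃ α A, α ≠ [] ∧ Lin N A α (pathRng N L) ∧ Qofw (word L) = qw (α.map Gen.pos) ∧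
      Qofw (invWord L) = qw (α.reverse.map Gen.neg) := by
  obtain ⟨⟨hne, -⟩, hlin, hred⟩ := hL
  have key : (∀ a ∈ L, ∃ t, tsym N t = a) → ∃ α A, α ≠ [] ∧ Lin N A α (pathRng N L) ∧
      Qofw (word L) = qw (α.map Gen.pos) ∧ Qofw (invWord L) = qw (α.reverse.map Gen.neg) := by
    intro h
    obtain ⟨α, rfl⟩ : ∃ α : List T, α.map (tsym N) = L := by
      clear hne hlin hred h0
      induction L with
      | nil => exact ⟨[], rfl⟩
      | cons a L ih =>
        obtain ⟨t, rfl⟩ := h a (by simp)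
        obtain ⟨α, rfl⟩ := ih fun b hb => h b (List.mem_cons_of_mem _ hb)
        exact ⟨t :: α, rfl⟩
    have hα : α ≠ [] := fun h => hne (by simp [h])
    obtain ⟨A, hA⟩ := hlin.lin hα
    exact ⟨α, A, hα, hA, Qofw_word_map, Qofw_invWord_map⟩
  match L, hne with
  | [Sum.inr A], _ => exact absurd ⟨A, rfl⟩ h0
  | [Sum.inl t], _ =>
    apply key
    intro a ha
    exact ⟨t, (List.mem_singleton.1 ha).symm⟩
  | [Sum.inr A, b], _ =>
    exact absurd (hlin 0 (Sum.inr A) b rfl rfl) (hred.1 0 (Sum.inr A) b rfl rfl rfl)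
  | [Sum.inl t, Sum.inl u], _ =>
    apply key
    intro a ha
    rcases List.mem_cons.1 ha with rfl | ha
    · exact ⟨t, rfl⟩
    · exact ⟨u, (List.mem_singleton.1 ha).symm⟩
  | [Sum.inl t, Sum.inr A], _ =>
    have hA : N.r t = A.1 := hlin 0 (Sum.inl t) (Sum.inr A) rfl rfl
    have e : A = ⟨N.r t, Or.inr (Or.inl ⟨t, rfl⟩)⟩ := Subtype.ext hA.symm
    subst e
    exact ⟨[t], N.s t, by simp, ⟨rfl, rfl⟩,
      Qofw_eq_of_rel (NRel.nr1r (.pos t) (by simp)),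
      Qofw_eq_of_rel (NRel.nr1l (.neg t) (by simp))⟩
  | a :: b :: c :: L, _ => exact key (inl_of_reduced hlin hred (by simp))

theorem mem_Rset_iff (q : QGamma N) : q ∈ Rset N ↔ RLin N q := by
  have hmul : ∀ {α β : List T}, α ≠ [] → β ≠ [] →
      qw (letters N α β) = qw (α.map Gen.pos) * qw (β.reverse.map Gen.neg) := by
    intro α β hα hβ
    exact qw_append (by simpa using hα) (by simpa using hβ)
  constructor
  · rintro (⟨L, M, hL, hL0, hM, hM0, hr, rfl⟩ | h)
    · obtain ⟨α, A, hα, hA, hw, -⟩ := exists_lin_of_RLP hL hL0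
      obtain ⟨β, C, hβ, hC, -, hw'⟩ := exists_lin_of_RLP hM hM0
      refine Or.inr ⟨α, β, A, _, C, hα, hβ, hA, hr ▸ hC, ?_⟩
      rw [Qrnf, Qofw_mul, hw, hw', hmul hα hβ]
    · exact Or.inl h
  · rintro (h | ⟨α, β, A, B, C, hα, hβ, hA, hC, rfl⟩)
    · exact Or.inr h
    · refine Or.inl ⟨_, _, (hA.mem_RLP hα).1, (hA.mem_RLP hα).2, (hC.mem_RLP hβ).1,
        (hC.mem_RLP hβ).2, (hA.pathRng hα).trans (hC.pathRng hβ).symm, ?_⟩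
      rw [Qrnf, Qofw_mul, Qofw_word_map, Qofw_invWord_map, hmul hα hβ]

theorem Rset_mul_mem {p q : QGamma N} (hp : p ∈ Rset N) (hq : q ∈ Rset N) : p * q ∈ Rset N :=
  (mem_Rset_iff _).2 (((mem_Rset_iff _).1 hp).mul ((mem_Rset_iff _).1 hq))

theorem Rset_subset_Sset : Rset N ⊆ Sset N := by
  rintro q (⟨L, M, hL, -, hM, hM0, hr, h⟩ | h)
  · exact Or.inl ⟨L, M, ⟨hL.1, hL.2.2⟩, hM, hM0, hr, h⟩
  · exact Or.inr h

end Paths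

/-! ### Representation by partial injections -/

section Representation

variable {N : Network V T}

/-- The points on which `Q_Γ` acts: a set of vertices with a list of relations. -/
abbrev Pt (V T : Type) : Type := Set V × List T

open Classical in
/-- The partial map attached to a generator; `none` stands for an undefined value. -/
noncomputable def act : Gen N → Function.End (Option (Pt V T))
  | .pos t => fun o => o.bind fun x => if x.1 = N.r t then some (N.s t, t :: x.2) else none
  | .neg t => fun o => o.bind fun x =>
      if x.1 = N.s t ∧ x.2.head? = some t then some (N.r t, x.2.tail) else none
  | .ver A => fun o => o.bind fun x => if x.1 = A.1 then some x else none
  | .zero => fun _ => none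

theorem act_pos {t : T} {o : Option (Pt V T)} {y : Pt V T} :
    act (N := N) (.pos t) o = some y ↔ ∃ L, o = some (N.r t, L) ∧ y = (N.s t, t :: L) := by
  obtain _ | ⟨A, L⟩ := o
  · simp [act]
  · simp only [act, Option.bind_some, Option.some.injEq, Prod.mk.injEq]
    split_ifs with h
    · constructor
      · intro h'; exact ⟨L, ⟨h, rfl⟩, (Option.some.inj h').symm⟩
      · rintro ⟨L', ⟨-, rfl⟩, rfl⟩; rfl
    · constructor
      · intro h'; cases h'
      · rintro ⟨L', ⟨h', -⟩, -⟩; exact absurd h' h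

theorem act_neg {t : T} {o : Option (Pt V T)} {y : Pt V T} :
    act (N := N) (.neg t) o = some y ↔ ∃ L, o = some (N.s t, t :: L) ∧ y = (N.r t, L) := by
  obtain _ | ⟨A, L⟩ := o
  · simp [act]
  · simp only [act, Option.bind_some, Option.some.injEq, Prod.mk.injEq]
    split_ifs with h
    · obtain ⟨rfl, h⟩ := h
      obtain ⟨L', rfl⟩ := List.head?_eq_some_iff.1 h
      constructor
      · intro h'; exact ⟨L', ⟨rfl, rfl⟩, (Option.some.inj h').symm⟩
      · rintro ⟨L'', ⟨-, h'⟩, rfl⟩; cases h'; rfl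
    · constructor
      · intro h'; cases h'
      · rintro ⟨L', ⟨h1, rfl⟩, -⟩; exact absurd ⟨h1, rfl⟩ h

theorem act_ver {A : N.T0} {o : Option (Pt V T)} {y : Pt V T} :
    act (N := N) (.ver A) o = some y ↔ o = some y ∧ y.1 = A.1 := by
  obtain _ | x := o
  · simp [act]
  · simp only [act, Option.bind_some, Option.some.injEq]
    split_ifs with h
    · constructor
      · intro h'; cases h'; exact ⟨rfl, h⟩
      · rintro ⟨rfl, -⟩; rfl
    · constructor
      · intro h'; cases h'
      · rintro ⟨rfl, h'⟩; exact absurd h' h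

theorem act_zero {o : Option (Pt V T)} {y : Pt V T} :
    ¬ act (N := N) .zero o = some y := by simp [act]

/-- Equality of partial maps is equality of graphs. -/
theorem end_ext {X : Type*} {f g : Function.End (Option X)}
    (h : ∀ o y, f o = some y ↔ g o = some y) : f = g := by
  funext o
  exact Option.ext fun y => by simpa using h o y

theorem end_mul_apply {X : Type*} (f g : Function.End X) (x : X) : (f * g) x = f (g x) := rfl

theorem act_range {g : Gen N} {o : Option (Pt V T)} {y : Pt V T} (h : act g o = some y) :
    y.1 = g.srcSet := by
  cases g with
  | pos t => obtain ⟨L, -, rfl⟩ := act_pos.1 h; rfl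
  | neg t => obtain ⟨L, -, rfl⟩ := act_neg.1 h; rfl
  | ver A => exact (act_ver.1 h).2
  | zero => exact absurd h act_zero

theorem act_dom {g : Gen N} {o : Option (Pt V T)} {y : Pt V T} (h : act g o = some y) :
    ∃ x, o = some x ∧ x.1 = g.rngSet := by
  cases g with
  | pos t => obtain ⟨L, rfl, -⟩ := act_pos.1 h; exact ⟨_, rfl, rfl⟩
  | neg t => obtain ⟨L, rfl, -⟩ := act_neg.1 h; exact ⟨_, rfl, rfl⟩
  | ver A => exact ⟨y, act_ver.1 h⟩
  | zero => exact absurd h act_zero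

theorem srcSet_nonempty {g : Gen N} (hg : g ≠ .zero) : g.srcSet.Nonempty := by
  cases g with
  | pos t => exact N.s_nonempty t
  | neg t => exact N.r_nonempty t
  | ver A =>
    obtain ⟨A, ⟨t, rfl⟩ | ⟨t, rfl⟩ | ⟨v, rfl⟩⟩ := A
    · exact N.s_nonempty t
    · exact N.r_nonempty t
    · exact Set.singleton_nonempty v
  | zero => exact absurd rfl hg

theorem srcGen_eq_ver {g : Gen N} (hg : g ≠ .zero) :
    ∃ A : N.T0, g.srcGen = .ver A ∧ A.1 = g.srcSet := by
  cases g with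
  | zero => exact absurd rfl hg
  | _ => exact ⟨_, rfl, rfl⟩

theorem rngGen_eq_ver {g : Gen N} (hg : g ≠ .zero) :
    ∃ A : N.T0, g.rngGen = .ver A ∧ A.1 = g.rngSet := by
  cases g with
  | zero => exact absurd rfl hg
  | _ => exact ⟨_, rfl, rfl⟩

theorem act_none (g : Gen N) : act g none = none := by
  cases g <;> rfl

/-- The maps `act` satisfy the defining relations of `Q_Γ`. -/
theorem rep_rel {x y : FreeSemigroup (Gen N)} (h : NRel N x y) :
    FreeSemigroup.lift act x = FreeSemigroup.lift act y := by
  cases h with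
  | nr1l g hg =>
    obtain ⟨A, hA, hs⟩ := srcGen_eq_ver hg
    rw [map_mul, lift_of, lift_of, hA]
    refine end_ext fun o y => ?_
    rw [end_mul_apply, act_ver]
    exact ⟨fun h => h.1, fun h => ⟨h, (act_range h).trans hs.symm⟩⟩
  | nr1r g hg =>
    obtain ⟨A, hA, hs⟩ := rngGen_eq_ver hg
    rw [map_mul, lift_of, lift_of, hA]
    refine end_ext fun o y => ?_
    rw [end_mul_apply]
    constructor
    · intro h
      obtain ⟨x, hx, -⟩ := act_dom h
      rw [hx] at h
      rwa [(act_ver.1 hx).1]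
    · intro h
      obtain ⟨x, rfl, hx⟩ := act_dom h
      rwa [act_ver.2 ⟨rfl, hx.trans hs.symm⟩]
  | nr2 g₁ g₂ h₁ h₂ h =>
    rw [map_mul, lift_of, lift_of, lift_of]
    refine end_ext fun o y => ⟨fun h' => ?_, fun h' => absurd h' act_zero⟩
    rw [end_mul_apply] at h'
    obtain ⟨x, hx, hx'⟩ := act_dom h'
    -- The intermediate point lies over both sets, so they coincide and their meet is nonempty.
    rw [← hx', act_range hx, Set.inter_self] at h
    exact absurd h (srcSet_nonempty h₂).ne_empty
  | nr3 t₁ t₂ h =>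
    rw [map_mul, lift_of, lift_of, lift_of]
    refine end_ext fun o y => ⟨fun h' => ?_, fun h' => absurd h' act_zero⟩
    rw [end_mul_apply] at h'
    obtain ⟨L, hL, -⟩ := act_neg.1 h'
    obtain ⟨L', -, hL'⟩ := act_pos.1 hL
    simp only [Prod.mk.injEq, List.cons.injEq] at hL'
    exact absurd hL'.2.1 h
  | nr4 t =>
    rw [map_mul, lift_of, lift_of, lift_of]
    refine end_ext fun o y => ?_
    refine Iff.trans act_neg (Iff.trans ?_ act_ver.symm)
    constructor
    · rintro ⟨L, hL, rfl⟩
      obtain ⟨L', rfl, hL'⟩ := act_pos.1 hL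
      cases hL'
      exact ⟨rfl, rfl⟩
    · obtain ⟨A, L⟩ := y
      rintro ⟨rfl, rfl⟩
      exact ⟨L, act_pos.2 ⟨L, rfl, rfl⟩, rfl⟩
  | nr5 t A h =>
    rw [map_mul, lift_of, lift_of, lift_of]
    refine end_ext fun o y => ⟨fun h' => ?_, fun h' => absurd h' act_zero⟩
    rw [end_mul_apply] at h'
    obtain ⟨L, hL, -⟩ := act_neg.1 h'
    exact absurd (act_ver.1 hL).2.symm h
  | nr6l x =>
    rw [map_mul, lift_of, lift_of]
    rfl
  | nr6r x =>
    rw [map_mul, lift_of, lift_of]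
    exact funext fun o => act_none x

/-- The representation of `Q_Γ` by partial maps. -/
noncomputable def rep (q : QGamma N) : Function.End (Option (Pt V T)) :=
  Con.liftOn q (FreeSemigroup.lift act) fun _ _ h =>
    (Con.conGen_le (c := Con.ker (FreeSemigroup.lift act))).2 (fun _ _ h => rep_rel h) h

theorem rep_mul (p q : QGamma N) : rep (p * q) = rep p * rep q := by
  induction p using Con.induction_on with
  | H x =>
    induction q using Con.induction_on with
    | H y => exact map_mul (FreeSemigroup.lift act) x y

theorem rep_mul_apply (p q : QGamma N) (o : Option (Pt V T)) : rep (p * q) o = rep p (rep q o) := by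
  rw [rep_mul]; rfl

theorem rep_zero (o : Option (Pt V T)) : rep (Qzero N) o = none := rfl

theorem rep_single (g : Gen N) : rep (qw [g]) = act g := rfl

/-- A map of `Option X` that fixes `none` and is injective where it is defined. -/
def PartialInj {X : Type*} (f : Function.End (Option X)) : Prop :=
  f none = none ∧ ∀ o o' y, f o = some y → f o' = some y → o = o'

theorem act_inj (g : Gen N) : PartialInj (act g) := by
  refine ⟨act_none g, fun o o' y h h' => ?_⟩
  cases g with
  | pos t =>
    obtain ⟨L, rfl, rfl⟩ := act_pos.1 h
    obtain ⟨L', rfl, e⟩ := act_pos.1 h'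
    cases e; rfl
  | neg t =>
    obtain ⟨L, rfl, rfl⟩ := act_neg.1 h
    obtain ⟨L', rfl, e⟩ := act_neg.1 h'
    cases e; rfl
  | ver A => rw [(act_ver.1 h).1, (act_ver.1 h').1]
  | zero => exact absurd h act_zero

theorem PartialInj.mul {X : Type*} {f g : Function.End (Option X)} (hf : PartialInj f)
    (hg : PartialInj g) : PartialInj (f * g) := by
  refine ⟨by rw [end_mul_apply, hg.1, hf.1], fun o o' y h h' => ?_⟩
  have e := hf.2 _ _ _ h h'
  cases hx : g o with
  | none => rw [end_mul_apply, hx, hf.1] at h; cases h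
  | some x => exact hg.2 _ _ _ hx (e ▸ hx)

theorem rep_inj (q : QGamma N) : PartialInj (rep q) := by
  induction q using Con.induction_on with
  | H w =>
    induction w using FreeSemigroup.recOnMul with
    | ih1 x => exact act_inj x
    | ih2 x y hx hy =>
      change PartialInj (rep (Qofw (of x) * Qofw y))
      rw [rep_mul]
      exact PartialInj.mul hx hy

theorem partialInj_inverse_le {X : Type*} {f g h : Function.End (Option X)} (hf : PartialInj f)
    (hg : PartialInj g) (hgf : g * f * g = g) (hfh : f * h * f = f) {o : Option X} {y : X}
    (hy : g o = some y) : h o = some y := by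
  have h1 : g (f (g o)) = g o := congrFun hgf o
  have h2 : f (some y) = o := by
    rw [← hy]; exact hg.2 _ _ _ (h1.trans hy) hy
  have h3 : f (h (f (some y))) = f (some y) := congrFun hfh (some y)
  rw [h2] at h3
  cases o with
  | none => rw [hg.1] at hy; cases hy
  | some x => exact hf.2 _ _ _ h3 h2

/-- A partial injection has at most one generalized inverse among partial injections. -/
theorem partialInj_inverse_unique {X : Type*} {f g h : Function.End (Option X)} (hf : PartialInj f)
    (hg : PartialInj g) (hh : PartialInj h) (hfg : f * g * f = f) (hgf : g * f * g = g)
    (hfh : f * h * f = f) (hhf : h * f * h = h) : g = h :=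
  end_ext fun _ _ => ⟨partialInj_inverse_le hf hg hgf hfh, partialInj_inverse_le hf hh hhf hfg⟩

theorem rep_pos_eq_some {α : List T} (hα : α ≠ []) {A B : Set V} (h : Lin N A α B)
    {o : Option (Pt V T)} {y : Pt V T} :
    rep (qw (α.map (Gen.pos (N := N)))) o = some y ↔
      ∃ L, o = some (B, L) ∧ y = (A, α ++ L) := by
  induction α generalizing A y with
  | nil => exact absurd rfl hα
  | cons t α ih =>
    obtain ⟨rfl, h⟩ := h
    by_cases hn : α = []
    · subst hn
      cases h
      exact act_pos
    · rw [List.map_cons, qw_cons _ (by simpa using hn), rep_mul_apply, rep_single, act_pos]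
      constructor
      · rintro ⟨L, hL, rfl⟩
        obtain ⟨L', rfl, e⟩ := (ih hn h).1 hL
        cases e
        exact ⟨L', rfl, rfl⟩
      · rintro ⟨L, rfl, rfl⟩
        exact ⟨α ++ L, (ih hn h).2 ⟨L, rfl, rfl⟩, rfl⟩

theorem rep_neg_eq_some {δ : List T} (hδ : δ ≠ []) {C B : Set V} (h : Lin N C δ B)
    {o : Option (Pt V T)} {y : Pt V T} :
    rep (qw (δ.reverse.map (Gen.neg (N := N)))) o = some y ↔
      ∃ L, o = some (C, δ ++ L) ∧ y = (B, L) := by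
  induction δ generalizing C o with
  | nil => exact absurd rfl hδ
  | cons t δ ih =>
    obtain ⟨rfl, h⟩ := h
    by_cases hn : δ = []
    · subst hn
      cases h
      exact act_neg
    · rw [List.reverse_cons, List.map_append, qw_append (by simpa using hn) (by simp),
        rep_mul_apply, ih hn h]
      have e : rep (qw ([t].map (Gen.neg (N := N)))) = act (.neg t) := rfl
      rw [e]
      constructor
      · rintro ⟨L, hL, rfl⟩
        obtain ⟨L', rfl, e⟩ := act_neg.1 hL
        cases e
        exact ⟨L, rfl, rfl⟩
      · rintro ⟨L, rfl, rfl⟩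
        exact ⟨L, act_neg.2 ⟨δ ++ L, rfl, rfl⟩, rfl⟩

/-- The element `[αδ⁻¹]` acts by `(s(δ), δL) ↦ (s(α), αL)` and is undefined elsewhere. -/
theorem rep_qw_eq_some {α δ : List T} (hα : α ≠ []) (hδ : δ ≠ []) {A B C : Set V}
    (hA : Lin N A α B) (hC : Lin N C δ B) {o : Option (Pt V T)} {y : Pt V T} :
    rep (qw (letters N α δ)) o = some y ↔ ∃ L, o = some (C, δ ++ L) ∧ y = (A, α ++ L) := by
  rw [letters, qw_append (by simpa using hα) (by simpa using hδ), rep_mul_apply,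
    rep_pos_eq_some hα hA]
  constructor
  · rintro ⟨L, hL, rfl⟩
    obtain ⟨L', rfl, e⟩ := (rep_neg_eq_some hδ hC).1 hL
    cases e
    exact ⟨L, rfl, rfl⟩
  · rintro ⟨L, rfl, rfl⟩
    exact ⟨L, (rep_neg_eq_some hδ hC).2 ⟨L, rfl, rfl⟩, rfl⟩

theorem eq_of_prefixes {α γ L M : List T} (h : α = γ ++ L) (h' : γ = α ++ M) : α = γ :=
  List.IsPrefix.eq_of_length_le ⟨M, h'.symm⟩ (by rw [h]; simp)

/-- `DomLE p q`: the partial map of `p` is defined only where that of `q` is. -/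
def DomLE (p q : QGamma N) : Prop := ∀ o y, rep p o = some y → ∃ y', rep q o = some y'

/-- `RangeLE p q`: every value of the partial map of `p` is a value of that of `q`. -/
def RangeLE (p q : QGamma N) : Prop := ∀ o y, rep p o = some y → ∃ o', rep q o' = some y

/-- An element of `R_Γ` is determined by the domain and the image of its partial map. -/
theorem eq_of_dom_range {p q : QGamma N} (hp : RLin N p) (hq : RLin N q) (h₁ : DomLE p q)
    (h₂ : DomLE q p) (h₃ : RangeLE p q) (h₄ : RangeLE q p) : p = q := by
  obtain rfl | ⟨α, β, A, B, C, hα, hβ, hA, hC, rfl⟩ := hp <;>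
  obtain rfl | ⟨γ, δ, A', B', C', hγ, hδ, hA', hC', rfl⟩ := hq
  · rfl
  · obtain ⟨y, hy⟩ := h₂ _ _ ((rep_qw_eq_some hγ hδ hA' hC').2 ⟨[], rfl, rfl⟩)
    rw [rep_zero] at hy; cases hy
  · obtain ⟨y, hy⟩ := h₁ _ _ ((rep_qw_eq_some hα hβ hA hC).2 ⟨[], rfl, rfl⟩)
    rw [rep_zero] at hy; cases hy
  · have k := (rep_qw_eq_some hα hβ hA hC).2 ⟨[], rfl, rfl⟩
    have k' := (rep_qw_eq_some hγ hδ hA' hC').2 ⟨[], rfl, rfl⟩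
    obtain ⟨_, d₁⟩ := h₁ _ _ k
    obtain ⟨L₁, e₁, -⟩ := (rep_qw_eq_some hγ hδ hA' hC').1 d₁
    obtain ⟨_, d₂⟩ := h₂ _ _ k'
    obtain ⟨L₂, e₂, -⟩ := (rep_qw_eq_some hα hβ hA hC).1 d₂
    obtain ⟨_, d₃⟩ := h₃ _ _ k
    obtain ⟨L₃, -, e₃⟩ := (rep_qw_eq_some hγ hδ hA' hC').1 d₃
    obtain ⟨_, d₄⟩ := h₄ _ _ k'
    obtain ⟨L₄, -, e₄⟩ := (rep_qw_eq_some hα hβ hA hC).1 d₄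
    simp only [List.append_nil, Option.some.injEq, Prod.mk.injEq] at e₁ e₂ e₃ e₄
    rw [eq_of_prefixes e₁.2 e₂.2, eq_of_prefixes e₃.2 e₄.2]

theorem eq_of_rep_eq {p q : QGamma N} (hp : RLin N p) (hq : RLin N q) (h : rep p = rep q) :
    p = q :=
  eq_of_dom_range hp hq (fun _ y hy => ⟨y, h ▸ hy⟩) (fun _ y hy => ⟨y, h ▸ hy⟩)
    (fun o _ hy => ⟨o, h ▸ hy⟩) (fun o _ hy => ⟨o, h ▸ hy⟩)

/-- Mutually converse partial maps are generalized inverses of each other. -/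
theorem mul_mul_of_converse {X : Type*} {f g : Function.End (Option X)} (hf : f none = none)
    (h : ∀ x y, f (some x) = some y → g (some y) = some x) (hg : g none = none) :
    f * g * f = f := by
  funext o
  change f (g (f o)) = f o
  cases o with
  | none => rw [hf, hg, hf]
  | some x =>
    cases hy : f (some x) with
    | none => rw [hg, hf]
    | some y => rw [h x y hy, hy]

theorem exists_inverse {p : QGamma N} (hp : RLin N p) :
    ∃ q, RLin N q ∧ p * q * p = p ∧ q * p * q = q := by
  have hp' := hp
  obtain rfl | ⟨α, β, A, B, C, hα, hβ, hA, hC, rfl⟩ := hp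
  · exact ⟨Qzero N, Or.inl rfl, by simp only [Qzero_mul], by simp only [Qzero_mul]⟩
  · have hq : RLin N (qw (letters N β α)) := Or.inr ⟨β, α, C, B, A, hβ, hα, hC, hA, rfl⟩
    refine ⟨_, hq, eq_of_rep_eq ((hp'.mul hq).mul hp') hp' ?_,
      eq_of_rep_eq ((hq.mul hp').mul hq) hq ?_⟩
    · rw [rep_mul, rep_mul]
      refine mul_mul_of_converse (rep_inj _).1 (fun x y h => ?_) (rep_inj _).1
      obtain ⟨L, e, rfl⟩ := (rep_qw_eq_some hα hβ hA hC).1 h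
      exact (rep_qw_eq_some hβ hα hC hA).2 ⟨L, rfl, Option.some.inj e⟩
    · rw [rep_mul, rep_mul]
      refine mul_mul_of_converse (rep_inj _).1 (fun x y h => ?_) (rep_inj _).1
      obtain ⟨L, e, rfl⟩ := (rep_qw_eq_some hβ hα hC hA).1 h
      exact (rep_qw_eq_some hα hβ hA hC).2 ⟨L, rfl, Option.some.inj e⟩

theorem DomLE.of_mul {S : Subsemigroup (QGamma N)} {a b : S} {x : WithOne S}
    (h : x * (a : WithOne S) = b) : DomLE (b : QGamma N) (a : QGamma N) := by
  intro o y hy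
  cases x using WithOne.recOneCoe with
  | one =>
    rw [one_mul, WithOne.coe_inj] at h
    exact ⟨y, h ▸ hy⟩
  | coe z =>
    rw [← WithOne.coe_mul, WithOne.coe_inj] at h
    rw [← h, MulMemClass.coe_mul, rep_mul_apply] at hy
    cases ha : rep (a : QGamma N) o with
    | none => rw [ha, (rep_inj _).1] at hy; cases hy
    | some y' => exact ⟨y', rfl⟩

theorem RangeLE.of_mul {S : Subsemigroup (QGamma N)} {a b : S} {x : WithOne S}
    (h : (a : WithOne S) * x = b) : RangeLE (b : QGamma N) (a : QGamma N) := by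
  intro o y hy
  cases x using WithOne.recOneCoe with
  | one =>
    rw [mul_one, WithOne.coe_inj] at h
    exact ⟨o, h ▸ hy⟩
  | coe z =>
    rw [← WithOne.coe_mul, WithOne.coe_inj] at h
    rw [← h, MulMemClass.coe_mul, rep_mul_apply] at hy
    exact ⟨_, hy⟩

end Representation

/-- for any network `Γ`, `R_Γ` is an inverse subsemigroup of `S_Γ` which is
fundamental: the only congruence on `R_Γ` contained in Green's relation `H` is the identity. -/
theorem RGamma_fundamental_inverse (N : Network V T) :
    ∃ Rsub : Subsemigroup (QGamma N), (Rsub : Set (QGamma N)) = Rset N ∧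
      Rset N ⊆ Sset N ∧
      IsInverseSemigroup Rsub ∧
      ∀ c : Con Rsub, (∀ a b : Rsub, c a b → GreenH a b) → ∀ a b : Rsub, c a b → a = b := by
  refine ⟨⟨Rset N, Rset_mul_mem⟩, rfl, Rset_subset_Sset, ?_, ?_⟩
  · rintro ⟨p, hp⟩
    obtain ⟨q, hq, hpq, hqp⟩ := exists_inverse ((mem_Rset_iff p).1 hp)
    refine ⟨⟨q, (mem_Rset_iff q).2 hq⟩, ⟨Subtype.ext hpq, Subtype.ext hqp⟩, ?_⟩
    rintro ⟨q', hq'⟩ ⟨h₁, h₂⟩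
    have h₁ : p * q' * p = p := congrArg Subtype.val h₁
    have h₂ : q' * p * q' = q' := congrArg Subtype.val h₂
    refine Subtype.ext (eq_of_rep_eq ((mem_Rset_iff q').1 hq') hq ?_)
    apply partialInj_inverse_unique (rep_inj p) (rep_inj q') (rep_inj q) <;>
      simp only [← rep_mul, h₁, h₂, hpq, hqp]
  · intro c hc a b hab
    obtain ⟨⟨⟨_, hl⟩, _, hl'⟩, ⟨_, hr⟩, _, hr'⟩ := hc a b hab
    exact Subtype.ext (eq_of_dom_range ((mem_Rset_iff _).1 a.2) ((mem_Rset_iff _).1 b.2)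
      (.of_mul hl') (.of_mul hl) (.of_mul hr') (.of_mul hr))

end NetworkSemigroup
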